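/- arXiv:1903.07228 — 2 statements merged into one kernel-verified Lean document; each statement's English description precedes it below -/
import Mathlib

section
/- Optimal rate of convergence for linear QSA (Theorem 2, equation (27)). Suppose every eigenvalue λ of Ā = I + A satisfies Re(λ) < −ε_S, where 0 < ε_S and ε_S ≠ 1, and set δ_S = min(ε_S, 1). Suppose ξ, ξ^I and ξ^II are bounded on [0,∞). Then there exists a constant C < ∞ such that every linear QSA process θ satisfies, for all t ≥ 0: ‖(t+1)θ(t) − ξ^I(t)‖ ≤ C·(1 + ‖θ(0)‖)/(1+t)^{δ_S}. In particular the scaled error ν(t) = (t+1)θ(t) couples with ξ^I: ‖ν(t) − ξ^I(t)‖ → 0 as t → ∞. -/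
open intervalIntegral Filter

/-!
Subtract from `(t + 1) • θ t` its first two approximations `ξI t` and `(1 / (t + 1)) • Ā (ξII t)`.
The remainder `z` solves `z' = (1 / (t + 1)) • (Ā z + O(1 / (t + 1)))`, which in the time
`log (1 + t)` has constant coefficients. Gelfand's formula and the spectral mapping theorem for
`exp` turn the spectral condition into `‖exp (s • Ā)‖ ≤ K * exp (-ε * s)`, and Duhamel's formula
then bounds `z` by the slower of the decay `(1 + t) ^ (-ε)` of the flow and the decay
`(1 + t) ^ (-1)` of the forcing; for `ε ≠ 1` no logarithm appears.
-/

theorem isUnit_of_isUnit_coe_centralizer {R A : Type*} [CommSemiring R] [Semiring A] [Algebra R A]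
    {s : Set A} {x : Subalgebra.centralizer R s} (hx : IsUnit (x : A)) : IsUnit x := by
  obtain ⟨x, hcomm⟩ := x
  obtain ⟨u, rfl⟩ := hx
  have hinv : (↑u⁻¹ : A) ∈ Subalgebra.centralizer R s :=
    fun y hy => (Commute.units_inv_right (hcomm y hy : Commute y u)).eq
  exact ⟨⟨⟨u, hcomm⟩, ⟨_, hinv⟩, Subtype.ext u.mul_inv, Subtype.ext u.inv_mul⟩, rfl⟩

section BanachAlgebra

variable {B : Type*} [NormedRing B] [NormedAlgebra ℂ B] [CompleteSpace B]

theorem exists_norm_pow_le_of_spectralRadius_lt {a : B} {r : NNReal}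
    (h : spectralRadius ℂ a < r) : ∃ K : ℝ, ∀ n : ℕ, ‖a ^ n‖ ≤ K * r ^ n := by
  have hr : r ≠ 0 := by
    rintro rfl
    simp at h
  have hle : ∀ᶠ n : ℕ in atTop, ‖a ^ n‖ ≤ 1 * ‖(r : ℝ) ^ n‖ := by
    have hroot := spectrum.pow_nnnorm_pow_one_div_tendsto_nhds_spectralRadius a
    filter_upwards [hroot.eventually_lt_const h, eventually_gt_atTop 0] with n hn hn0
    have hpow : ‖a ^ n‖₊ ≤ r ^ n := by
      rw [one_div, ENNReal.rpow_inv_lt_iff (by positivity), ENNReal.rpow_natCast] at hn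
      exact_mod_cast hn.le
    simpa using NNReal.coe_le_coe.2 hpow
  obtain ⟨K, -, hK⟩ := Asymptotics.bound_of_isBigO_nat_atTop (Asymptotics.IsBigO.of_bound 1 hle)
  exact ⟨K, fun n => by simpa using hK (pow_ne_zero n (NNReal.coe_ne_zero.2 hr))⟩

/- The double commutant of `a` is a commutative Banach algebra that contains the inverses taken in
`B` of its elements, so `a` and `exp a` have the same spectra in it as in `B`, and there characters
compute them. -/
theorem spectrum_exp_subset (a : B) :
    spectrum ℂ (NormedSpace.exp a) ⊆ Complex.exp '' spectrum ℂ a := by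
  let C := Subalgebra.centralizer ℂ (Subalgebra.centralizer ℂ {a} : Set B)
  let : NormedCommRing C :=
    { (inferInstance : NormedRing C) with
      mul_comm := fun x y => Subtype.ext <|
        Set.centralizer_centralizer_comm_of_comm (S := {a}) (by simp) _ x.2 _ y.2 }
  let : NormedAlgebra ℚ B := .restrictScalars ℚ ℂ B
  let : NormedAlgebra ℚ C := .restrictScalars ℚ ℂ C
  have : CompleteSpace C := (Set.isClosed_centralizer _).completeSpace_coe
  let b : C := ⟨a, Set.subset_centralizer_centralizer rfl⟩
  have hexp : ↑(NormedSpace.exp b) = NormedSpace.exp a :=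
    NormedSpace.map_exp C.val continuous_subtype_val b
  intro μ hμ
  rw [← hexp] at hμ
  obtain ⟨φ, rfl⟩ :=
    WeakDual.CharacterSpace.mem_spectrum_iff_exists.1 (spectrum.subset_subalgebra _ hμ)
  refine ⟨φ b, ?_, ?_⟩
  · exact fun hunit => AlgHom.apply_mem_spectrum φ b (isUnit_of_isUnit_coe_centralizer hunit)
  · rw [Complex.exp_eq_exp_ℂ]
    exact (NormedSpace.map_exp φ (map_continuous φ) b).symm

theorem exists_norm_exp_smul_le_of_spectrum_re_lt {a : B} {ω : ℝ}
    (h : ∀ z ∈ spectrum ℂ a, z.re < ω) :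
    ∃ K : ℝ, ∀ s : ℝ, 0 ≤ s → ‖NormedSpace.exp (s • a)‖ ≤ K * Real.exp (ω * s) := by
  cases subsingleton_or_nontrivial B
  · exact ⟨0, fun s _ => by simp [Subsingleton.elim (NormedSpace.exp (s • a)) 0]⟩
  let : NormedAlgebra ℚ B := .restrictScalars ℚ ℂ B
  have hradius : spectralRadius ℂ (NormedSpace.exp a) < (Real.exp ω).toNNReal := by
    refine spectrum.spectralRadius_lt_of_forall_lt _ fun z hz => ?_
    obtain ⟨w, hw, rfl⟩ := spectrum_exp_subset a hz
    simpa [← NNReal.coe_lt_coe, Complex.norm_exp, Real.exp_nonneg] using h w hw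
  obtain ⟨K, hK⟩ := exists_norm_pow_le_of_spectralRadius_lt hradius
  have hcont : Continuous fun s : ℝ => Real.exp (-ω * s) • NormedSpace.exp (s • a) :=
    (by fun_prop : Continuous fun s : ℝ => Real.exp (-ω * s)).smul
      (NormedSpace.exp_continuous.comp (by fun_prop))
  obtain ⟨K', hK'⟩ :=
    isCompact_Icc.exists_bound_of_continuousOn (hcont.continuousOn (s := .Icc 0 1))
  refine ⟨K' * K, fun s hs => ?_⟩
  have hfract : ‖NormedSpace.exp (Int.fract s • a)‖ ≤ K' * Real.exp (ω * Int.fract s) := by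
    have := hK' _ ⟨Int.fract_nonneg s, (Int.fract_lt_one s).le⟩
    rwa [norm_smul, Real.norm_of_nonneg (Real.exp_nonneg _), neg_mul, Real.exp_neg, inv_mul_eq_div,
      div_le_iff₀ (Real.exp_pos _)] at this
  have hfloor : ‖NormedSpace.exp a ^ ⌊s⌋₊‖ ≤ K * Real.exp (ω * ⌊s⌋₊) := by
    simpa [Real.exp_nonneg, ← Real.exp_nat_mul, mul_comm] using hK ⌊s⌋₊
  have hs_split : s = Int.fract s + ⌊s⌋₊ := by
    rw [natCast_floor_eq_intCast_floor hs, Int.fract_add_floor]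
  calc ‖NormedSpace.exp (s • a)‖
      = ‖NormedSpace.exp (Int.fract s • a) * NormedSpace.exp a ^ ⌊s⌋₊‖ := by
        rw [← NormedSpace.exp_nsmul, ← NormedSpace.exp_add_of_commute
          (((Commute.refl a).smul_left _).smul_right _), ← Nat.cast_smul_eq_nsmul ℝ, ← add_smul,
          ← hs_split]
    _ ≤ K' * Real.exp (ω * Int.fract s) * (K * Real.exp (ω * ⌊s⌋₊)) :=
        norm_mul_le_of_le hfract hfloor
    _ = K' * K * Real.exp (ω * s) := by
        rw [mul_mul_mul_comm, ← Real.exp_add, ← mul_add, ← hs_split]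

end BanachAlgebra

theorem exists_norm_exp_smul_le_of_injective {A B : Type*} [NormedRing A] [NormedAlgebra ℝ A]
    [FiniteDimensional ℝ A] [NormedRing B] [NormedAlgebra ℂ B] [CompleteSpace B]
    {f : A →ₐ[ℝ] B} (hf : Function.Injective f) {a : A} {ω : ℝ}
    (h : ∀ z ∈ spectrum ℂ (f a), z.re < ω) :
    ∃ K : ℝ, ∀ s : ℝ, 0 ≤ s → ‖NormedSpace.exp (s • a)‖ ≤ K * Real.exp (ω * s) := by
  have : CompleteSpace A := FiniteDimensional.complete ℝ A
  let : NormedAlgebra ℚ A := .restrictScalars ℚ ℝ A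
  let : NormedAlgebra ℚ B := .restrictScalars ℚ ℂ B
  obtain ⟨K, hK⟩ := exists_norm_exp_smul_le_of_spectrum_re_lt h
  obtain ⟨c, -, hc⟩ := f.toLinearMap.exists_antilipschitzWith (LinearMap.ker_eq_bot.2 hf)
  refine ⟨c * K, fun s hs => ?_⟩
  have hexp : f (NormedSpace.exp (s • a)) = NormedSpace.exp (s • f a) := by
    rw [NormedSpace.map_exp f f.toLinearMap.continuous_of_finiteDimensional, map_smul]
  calc ‖NormedSpace.exp (s • a)‖
      ≤ c * ‖f (NormedSpace.exp (s • a))‖ :=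
        ZeroHomClass.bound_of_antilipschitz f.toLinearMap hc _
    _ ≤ c * (K * Real.exp (ω * s)) := by
        rw [hexp]
        gcongr
        exact hK s hs
    _ = c * K * Real.exp (ω * s) := (mul_assoc _ _ _).symm

open scoped Matrix.Norms.Operator in
theorem exists_norm_exp_smul_toEuclideanCLM_le {n : Type*} [Fintype n] [DecidableEq n]
    {M : Matrix n n ℝ} {ω : ℝ}
    (h : ∀ z ∈ spectrum ℂ (M.map (Complex.ofReal : ℝ → ℂ)), z.re < ω) :
    ∃ K : ℝ, ∀ s : ℝ, 0 ≤ s →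
      ‖NormedSpace.exp (s • Matrix.toEuclideanCLM (n := n) (𝕜 := ℝ) M)‖ ≤ K * Real.exp (ω * s) := by
  let f : (EuclideanSpace ℝ n →L[ℝ] EuclideanSpace ℝ n) →ₐ[ℝ] Matrix n n ℂ :=
    Complex.ofRealAm.mapMatrix.comp Matrix.toEuclideanCLM.symm.toAlgEquiv.toAlgHom
  have hf : Function.Injective f :=
    (Matrix.map_injective Complex.ofReal_injective).comp Matrix.toEuclideanCLM.symm.injective
  have hfM : f (Matrix.toEuclideanCLM (n := n) (𝕜 := ℝ) M) = M.map Complex.ofReal := by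
    simp [f]
  exact exists_norm_exp_smul_le_of_injective hf fun z hz => h z (hfM ▸ hz)

theorem hasDerivWithinAt_integral_Ici {E : Type*} [NormedAddCommGroup E] [NormedSpace ℝ E]
    [CompleteSpace E] {f : ℝ → E} {a t : ℝ} (hf : ContinuousOn f (Set.Ici a)) (ht : a ≤ t) :
    HasDerivWithinAt (fun t => ∫ r in a..t, f r) (f t) (Set.Ici a) t := by
  have hcont : Continuous fun r => f (max a r) :=
    hf.comp_continuous (by fun_prop) fun r => le_max_left a r
  have hderiv := (hcont.integral_hasStrictDerivAt a t).hasDerivAt.hasDerivWithinAt (s := .Ici a)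
  rw [max_eq_right ht] at hderiv
  refine hderiv.congr_of_mem (fun u hu => integral_congr fun r hr => ?_) ht
  rw [Set.uIcc_of_le hu] at hr
  simp only [max_eq_right hr.1]

section LogTime

variable {E : Type*} [NormedAddCommGroup E] [NormedSpace ℝ E] {L : E →L[ℝ] E}
  {K a b G : ℝ}

theorem norm_exp_sub_smul_apply_le
    (hL : ∀ s : ℝ, 0 ≤ s → ‖NormedSpace.exp (s • L)‖ ≤ K * Real.exp (-a * s)) {v : E} {s T : ℝ}
    (hv : ‖v‖ ≤ G * Real.exp (-b * s)) (hs : s ≤ T) :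
    ‖NormedSpace.exp ((T - s) • L) v‖ ≤
      K * Real.exp (-a * T) * (G * Real.exp ((a - b) * s)) := by
  calc ‖NormedSpace.exp ((T - s) • L) v‖
      ≤ K * Real.exp (-a * (T - s)) * (G * Real.exp (-b * s)) :=
        ContinuousLinearMap.le_of_opNorm_le_of_le _ (hL _ (sub_nonneg.2 hs)) hv
    _ = K * Real.exp (-a * T) * (G * Real.exp ((a - b) * s)) := by
        rw [show -a * (T - s) = -a * T + a * s by ring, show (a - b) * s = a * s + -b * s by ring,
          Real.exp_add, Real.exp_add]
        ring

theorem hasDerivWithinAt_comp_exp_sub_one {z : ℝ → E} {v : E} {u : ℝ}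
    (hz : HasDerivWithinAt z ((1 / (Real.exp u - 1 + 1)) • v) (Set.Ici 0) (Real.exp u - 1)) :
    HasDerivWithinAt (fun u => z (Real.exp u - 1)) v (Set.Ici 0) u := by
  have hmaps : Set.MapsTo (fun u => Real.exp u - 1) (Set.Ici 0) (Set.Ici 0) :=
    fun u hu => sub_nonneg.2 (Real.one_le_exp hu)
  have := hz.scomp u ((Real.hasDerivAt_exp u).sub_const 1).hasDerivWithinAt hmaps
  simpa [smul_smul, Real.exp_ne_zero] using! this

theorem hasDerivAt_exp_mul_sub_one_div {c : ℝ} (hc : c ≠ 0) (s : ℝ) :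
    HasDerivAt (fun s => (Real.exp (c * s) - 1) / c) (Real.exp (c * s)) s := by
  simpa [hc] using ((((hasDerivAt_id s).const_mul c).exp).sub_const 1).div_const c

theorem exp_neg_mul_le_exp_neg_mul {c d T : ℝ} (hcd : c ≤ d) (hT : 0 ≤ T) :
    Real.exp (-d * T) ≤ Real.exp (-c * T) :=
  Real.exp_le_exp.2 (mul_le_mul_of_nonneg_right (neg_le_neg hcd) hT)

theorem exp_sub_exp_div_sub_le (a b : ℝ) {T : ℝ} (hT : 0 ≤ T) :
    (Real.exp (-b * T) - Real.exp (-a * T)) / (a - b) ≤ Real.exp (-min a b * T) / |a - b| := by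
  refine (le_abs_self _).trans ?_
  rw [abs_div]
  gcongr
  exact abs_sub_le_of_nonneg_of_le (Real.exp_nonneg _)
    (exp_neg_mul_le_exp_neg_mul (min_le_right a b) hT) (Real.exp_nonneg _)
    (exp_neg_mul_le_exp_neg_mul (min_le_left a b) hT)

variable [CompleteSpace E]

theorem hasDerivWithinAt_exp_sub_smul_apply {y : ℝ → E} {v : E} {I : Set ℝ} {s : ℝ}
    (hy : HasDerivWithinAt y (L (y s) + v) I s) (T : ℝ) :
    HasDerivWithinAt (fun s => NormedSpace.exp ((T - s) • L) (y s))
      (NormedSpace.exp ((T - s) • L) v) I s := by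
  have hexp : HasDerivAt (fun s => NormedSpace.exp ((T - s) • L))
      ((-1 : ℝ) • (NormedSpace.exp ((T - s) • L) * L)) s :=
    (hasDerivAt_exp_smul_const (𝕂 := ℝ) L (T - s)).scomp s ((hasDerivAt_id s).const_sub T)
  simpa using hexp.hasDerivWithinAt.clm_apply hy

/- Duhamel's formula in differential form: `s ↦ exp ((T - s) • L) (y s)` runs from
`exp (T • L) (y 0)` to `y T`, and only the forcing contributes to its derivative. -/
theorem norm_le_of_hasDerivWithinAt_add
    (hL : ∀ s : ℝ, 0 ≤ s → ‖NormedSpace.exp (s • L)‖ ≤ K * Real.exp (-a * s)) (hab : a ≠ b)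
    {y g : ℝ → E} (hy : ∀ s, 0 ≤ s → HasDerivWithinAt y (L (y s) + g s) (Set.Ici 0) s)
    (hg : ∀ s, 0 ≤ s → ‖g s‖ ≤ G * Real.exp (-b * s)) {T : ℝ} (hT : 0 ≤ T) :
    ‖y T‖ ≤ K * (Real.exp (-a * T) * ‖y 0‖ +
      G * ((Real.exp (-b * T) - Real.exp (-a * T)) / (a - b))) := by
  let flow : ℝ → E := fun s => NormedSpace.exp ((T - s) • L) (y s)
  have hflow : ∀ s, 0 ≤ s →
      HasDerivWithinAt flow (NormedSpace.exp ((T - s) • L) (g s)) (Set.Ici 0) s :=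
    fun s hs => hasDerivWithinAt_exp_sub_smul_apply (hy s hs) T
  let bound : ℝ → ℝ := fun s => K * Real.exp (-a * T) *
    (‖y 0‖ + G * ((Real.exp ((a - b) * s) - 1) / (a - b)))
  have hbound : ∀ s, HasDerivAt bound
      (K * Real.exp (-a * T) * (G * Real.exp ((a - b) * s))) s := fun s =>
    (((hasDerivAt_exp_mul_sub_one_div (sub_ne_zero.2 hab) s).const_mul G).const_add _).const_mul _
  have hstart : ‖flow 0‖ ≤ bound 0 := by
    simpa [flow, bound] using ContinuousLinearMap.le_of_opNorm_le _ (hL T hT) (y 0)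
  have hend : ‖flow T‖ ≤ bound T :=
    image_norm_le_of_norm_deriv_right_le_deriv_boundary'
      (fun s hs => (hflow s hs.1).continuousWithinAt.mono Set.Icc_subset_Ici_self)
      (fun s hs => (hflow s hs.1).mono (Set.Ici_subset_Ici.2 hs.1)) hstart
      (fun s _ => (hbound s).continuousAt.continuousWithinAt)
      (fun s _ => (hbound s).hasDerivWithinAt)
      (fun s hs => norm_exp_sub_smul_apply_le hL (hg s hs.1) hs.2.le) (Set.right_mem_Icc.2 hT)
  calc ‖y T‖ = ‖flow T‖ := by simp [flow]
    _ ≤ bound T := hend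
    _ = K * (Real.exp (-a * T) * ‖y 0‖ +
          G * ((Real.exp (-b * T) - Real.exp (-a * T)) / (a - b))) := by
        rw [show -b * T = -a * T + (a - b) * T by ring, Real.exp_add]
        ring

theorem norm_le_mul_exp_neg_min_of_hasDerivWithinAt_add
    (hL : ∀ s : ℝ, 0 ≤ s → ‖NormedSpace.exp (s • L)‖ ≤ K * Real.exp (-a * s)) (hab : a ≠ b)
    {y g : ℝ → E} (hy : ∀ s, 0 ≤ s → HasDerivWithinAt y (L (y s) + g s) (Set.Ici 0) s)
    (hg : ∀ s, 0 ≤ s → ‖g s‖ ≤ G * Real.exp (-b * s)) {T : ℝ} (hT : 0 ≤ T) :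
    ‖y T‖ ≤ K * (‖y 0‖ + G / |a - b|) * Real.exp (-min a b * T) := by
  have hK : 0 ≤ K := by simpa using (norm_nonneg _).trans (hL 0 le_rfl)
  have hG : 0 ≤ G := by simpa using (norm_nonneg _).trans (hg 0 le_rfl)
  calc ‖y T‖ ≤ K * (Real.exp (-a * T) * ‖y 0‖ +
        G * ((Real.exp (-b * T) - Real.exp (-a * T)) / (a - b))) :=
        norm_le_of_hasDerivWithinAt_add hL hab hy hg hT
    _ ≤ K * (Real.exp (-min a b * T) * ‖y 0‖ + G * (Real.exp (-min a b * T) / |a - b|)) := by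
        gcongr K * (?_ * _ + G * ?_)
        · exact exp_neg_mul_le_exp_neg_mul (min_le_left a b) hT
        · exact exp_sub_exp_div_sub_le a b hT
    _ = K * (‖y 0‖ + G / |a - b|) * Real.exp (-min a b * T) := by ring

/- In the time `u = log (1 + t)` the equation has constant coefficients, and `(1 + t) ^ (-c)` is
`exp (-c * u)`. -/
theorem norm_le_div_rpow_min_of_hasDerivWithinAt
    (hL : ∀ s : ℝ, 0 ≤ s → ‖NormedSpace.exp (s • L)‖ ≤ K * Real.exp (-a * s)) (hab : a ≠ b)
    {z g : ℝ → E}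
    (hz : ∀ t, 0 ≤ t → HasDerivWithinAt z ((1 / (t + 1)) • (L (z t) + g t)) (Set.Ici 0) t)
    (hg : ∀ t, 0 ≤ t → ‖g t‖ ≤ G / (1 + t) ^ b) {t : ℝ} (ht : 0 ≤ t) :
    ‖z t‖ ≤ K * (‖z 0‖ + G / |a - b|) / (1 + t) ^ min a b := by
  have hexp : ∀ {u : ℝ}, 0 ≤ u → 0 ≤ Real.exp u - 1 := fun hu => sub_nonneg.2 (Real.one_le_exp hu)
  have hforcing : ∀ u, 0 ≤ u → ‖g (Real.exp u - 1)‖ ≤ G * Real.exp (-b * u) := by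
    intro u hu
    simpa [← Real.exp_mul, div_eq_mul_inv, ← Real.exp_neg, mul_comm u] using hg _ (hexp hu)
  have hlog := norm_le_mul_exp_neg_min_of_hasDerivWithinAt_add hL hab
    (fun u hu => hasDerivWithinAt_comp_exp_sub_one (hz _ (hexp hu))) hforcing
    (Real.log_nonneg (by linarith : 1 ≤ 1 + t))
  have ht1 : 0 < 1 + t := by linarith
  simpa [Real.exp_log ht1, Real.rpow_def_of_pos ht1, div_eq_mul_inv, ← Real.exp_neg,
    mul_comm (Real.log (1 + t))] using hlog

end LogTime

section LinearQSA

variable {E : Type*} [NormedAddCommGroup E] [NormedSpace ℝ E] {A : E →L[ℝ] E}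
  {ξ ξI ξII θ : ℝ → E}

/-- The linear quasi-stochastic approximation (QSA) ODE with probing signal `ξ`. The derivative is
taken within `[0, ∞)`, hence one-sided at `t = 0`. -/
def IsLinearQSA (A : E →L[ℝ] E) (ξ θ : ℝ → E) : Prop :=
  ∀ t, 0 ≤ t → HasDerivWithinAt θ ((1 / (t + 1)) • (A (θ t) + ξ t)) (Set.Ici 0) t

/-- The scaled error `(t + 1) • θ t` of a QSA process minus its first two approximations in powers
of `1 / (t + 1)`. The second one cancels the forcing `(1 / (t + 1)) • (1 + A) (ξI t)` left by the
first, so that only a forcing by the bounded function `ξII`, of order `1 / (t + 1) ^ 2`, remains. -/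
noncomputable def secondOrderError (A : E →L[ℝ] E) (ξI ξII θ : ℝ → E) (t : ℝ) : E :=
  (t + 1) • θ t - ξI t - (1 / (t + 1)) • (1 + A) (ξII t)

theorem hasDerivAt_one_div_add_one {t : ℝ} (ht : 0 ≤ t) :
    HasDerivAt (fun t : ℝ => 1 / (t + 1)) (-(1 / (t + 1) ^ 2)) t := by
  simpa [neg_div] using ((hasDerivAt_id t).add_const 1).fun_inv (by simp; linarith)

theorem IsLinearQSA.hasDerivWithinAt_secondOrderError (hθ : IsLinearQSA A ξ θ) {t : ℝ} (ht : 0 ≤ t)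
    (hξI : HasDerivWithinAt ξI (ξ t) (Set.Ici 0) t)
    (hξII : HasDerivWithinAt ξII (ξI t) (Set.Ici 0) t) :
    HasDerivWithinAt (secondOrderError A ξI ξII θ)
      ((1 / (t + 1)) • ((1 + A) (secondOrderError A ξI ξII θ t) +
        (1 / (t + 1)) • (1 + A) ((1 + A) (ξII t) + ξII t))) (Set.Ici 0) t := by
  have ht1 : t + 1 ≠ 0 := by linarith
  have hscaled : HasDerivWithinAt (fun t => (t + 1) • θ t)
      ((t + 1) • (1 / (t + 1)) • (A (θ t) + ξ t) + (1 : ℝ) • θ t) (Set.Ici 0) t :=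
    ((hasDerivAt_id t).add_const 1).hasDerivWithinAt.fun_smul (hθ t ht)
  have hcorrection : HasDerivWithinAt (fun t => (1 / (t + 1)) • (1 + A) (ξII t))
      ((1 / (t + 1)) • (1 + A) (ξI t) + (-(1 / (t + 1) ^ 2)) • (1 + A) (ξII t)) (Set.Ici 0) t :=
    (hasDerivAt_one_div_add_one ht).hasDerivWithinAt.fun_smul
      ((1 + A).hasFDerivAt.comp_hasDerivWithinAt t hξII)
  refine ((hscaled.sub hξI).sub hcorrection).congr_deriv ?_
  simp only [secondOrderError, map_sub, map_smul, map_add, add_apply, one_apply_eq_self]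
  match_scalars <;> field_simp <;> ring

theorem one_div_add_one_le_one_div_rpow {c t : ℝ} (hc : c ≤ 1) (ht : 0 ≤ t) :
    1 / (t + 1) ≤ 1 / (1 + t) ^ c := by
  gcongr
  simpa [add_comm t] using Real.rpow_le_rpow_of_exponent_le (by linarith : 1 ≤ 1 + t) hc

variable [CompleteSpace E] {K ε M : ℝ}

theorem IsLinearQSA.norm_secondOrderError_le (hθ : IsLinearQSA A ξ θ) (hε : ε ≠ 1)
    (hexp : ∀ s : ℝ, 0 ≤ s → ‖NormedSpace.exp (s • (1 + A))‖ ≤ K * Real.exp (-ε * s))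
    (hξI : ∀ t, 0 ≤ t → HasDerivWithinAt ξI (ξ t) (Set.Ici 0) t)
    (hξII : ∀ t, 0 ≤ t → HasDerivWithinAt ξII (ξI t) (Set.Ici 0) t)
    (hM : ∀ t, 0 ≤ t → ‖ξII t‖ ≤ M) {t : ℝ} (ht : 0 ≤ t) :
    ‖secondOrderError A ξI ξII θ t‖ ≤
      K * (‖secondOrderError A ξI ξII θ 0‖ + ‖1 + A‖ * (‖1 + A‖ * M + M) / |ε - 1|) /
        (1 + t) ^ min ε 1 := by
  refine norm_le_div_rpow_min_of_hasDerivWithinAt hexp hε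
    (fun t ht => hθ.hasDerivWithinAt_secondOrderError ht (hξI t ht) (hξII t ht))
    (fun t ht => ?_) ht
  rw [norm_smul, Real.norm_of_nonneg (by positivity), Real.rpow_one, add_comm t,
    one_div_mul_eq_div]
  gcongr
  exact (1 + A).le_opNorm_of_le
    (norm_add_le_of_le ((1 + A).le_opNorm_of_le (hM t ht)) (hM t ht))

theorem IsLinearQSA.norm_scaledError_sub_le (hθ : IsLinearQSA A ξ θ) (hε : ε ≠ 1)
    (hexp : ∀ s : ℝ, 0 ≤ s → ‖NormedSpace.exp (s • (1 + A))‖ ≤ K * Real.exp (-ε * s))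
    (hξI : ∀ t, 0 ≤ t → HasDerivWithinAt ξI (ξ t) (Set.Ici 0) t) (hξI0 : ξI 0 = 0)
    (hξII : ∀ t, 0 ≤ t → HasDerivWithinAt ξII (ξI t) (Set.Ici 0) t) (hξII0 : ξII 0 = 0)
    (hM : ∀ t, 0 ≤ t → ‖ξII t‖ ≤ M) {t : ℝ} (ht : 0 ≤ t) :
    ‖(t + 1) • θ t - ξI t‖ ≤
      (K * (‖θ 0‖ + ‖1 + A‖ * (‖1 + A‖ * M + M) / |ε - 1|) + ‖1 + A‖ * M) /
        (1 + t) ^ min ε 1 := by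
  have herror := hθ.norm_secondOrderError_le hε hexp hξI hξII hM ht
  have herror0 : secondOrderError A ξI ξII θ 0 = θ 0 := by simp [secondOrderError, hξI0, hξII0]
  have hcorrection : ‖(1 / (t + 1)) • (1 + A) (ξII t)‖ ≤ ‖1 + A‖ * M / (1 + t) ^ min ε 1 := by
    rw [norm_smul, Real.norm_of_nonneg (by positivity), div_eq_inv_mul (‖1 + A‖ * M), ← one_div]
    exact mul_le_mul (one_div_add_one_le_one_div_rpow (min_le_right ε 1) ht)
      ((1 + A).le_opNorm_of_le (hM t ht)) (norm_nonneg _) (by positivity)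
  calc ‖(t + 1) • θ t - ξI t‖
      = ‖secondOrderError A ξI ξII θ t + (1 / (t + 1)) • (1 + A) (ξII t)‖ := by
        simp only [secondOrderError, sub_add_cancel]
    _ ≤ K * (‖θ 0‖ + ‖1 + A‖ * (‖1 + A‖ * M + M) / |ε - 1|) / (1 + t) ^ min ε 1 +
          ‖1 + A‖ * M / (1 + t) ^ min ε 1 :=
        norm_add_le_of_le (herror0 ▸ herror) hcorrection
    _ = (K * (‖θ 0‖ + ‖1 + A‖ * (‖1 + A‖ * M + M) / |ε - 1|) + ‖1 + A‖ * M) /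
          (1 + t) ^ min ε 1 := (add_div _ _ _).symm

theorem tendsto_div_one_add_rpow_atTop (C : ℝ) {c : ℝ} (hc : 0 < c) :
    Tendsto (fun t : ℝ => C / (1 + t) ^ c) atTop (nhds 0) :=
  ((tendsto_rpow_atTop hc).comp (tendsto_atTop_add_const_left atTop 1 tendsto_id)).const_div_atTop C

theorem linear_QSA_optimal_rate_general (hε : 0 < ε) (hε1 : ε ≠ 1)
    (hexp : ∀ s : ℝ, 0 ≤ s → ‖NormedSpace.exp (s • (1 + A))‖ ≤ K * Real.exp (-ε * s))
    (hξ : ContinuousOn ξ (Set.Ici 0)) (hξI : ∀ t, ξI t = ∫ r in (0 : ℝ)..t, ξ r)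
    (hξII : ∀ t, ξII t = ∫ r in (0 : ℝ)..t, ξI r) (hM : ∀ t, 0 ≤ t → ‖ξII t‖ ≤ M) :
    ∃ C : ℝ, ∀ θ : ℝ → E, IsLinearQSA A ξ θ →
      (∀ t : ℝ, 0 ≤ t → ‖(t + 1) • θ t - ξI t‖ ≤ C * (1 + ‖θ 0‖) / (1 + t) ^ min ε 1) ∧
      Tendsto (fun t => ‖(t + 1) • θ t - ξI t‖) atTop (nhds 0) := by
  have hξI' : ∀ t, 0 ≤ t → HasDerivWithinAt ξI (ξ t) (Set.Ici 0) t := fun t ht =>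
    funext hξI ▸ hasDerivWithinAt_integral_Ici hξ ht
  have hξII' : ∀ t, 0 ≤ t → HasDerivWithinAt ξII (ξI t) (Set.Ici 0) t := fun t ht =>
    funext hξII ▸ hasDerivWithinAt_integral_Ici (fun t ht => (hξI' t ht).continuousWithinAt) ht
  have hK : 0 ≤ K := by simpa using (norm_nonneg _).trans (hexp 0 le_rfl)
  have hM0 : 0 ≤ M := (norm_nonneg _).trans (hM 0 le_rfl)
  set G := ‖1 + A‖ * (‖1 + A‖ * M + M) / |ε - 1|
  have hbound : ∀ θ : ℝ → E, IsLinearQSA A ξ θ → ∀ t : ℝ, 0 ≤ t → ‖(t + 1) • θ t - ξI t‖ ≤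
      (K * (1 + G) + ‖1 + A‖ * M) * (1 + ‖θ 0‖) / (1 + t) ^ min ε 1 := by
    intro θ hθ t ht
    refine (hθ.norm_scaledError_sub_le hε1 hexp hξI' (by simp [hξI]) hξII' (by simp [hξII])
      hM ht).trans ?_
    gcongr
    have : 0 ≤ K * (1 + G * ‖θ 0‖) + ‖1 + A‖ * M * ‖θ 0‖ := by positivity
    linarith
  exact ⟨_, fun θ hθ => ⟨hbound θ hθ, squeeze_zero' (.of_forall fun _ => norm_nonneg _)
    ((eventually_ge_atTop 0).mono (hbound θ hθ))
    (tendsto_div_one_add_rpow_atTop _ (lt_min hε one_pos))⟩⟩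

end LinearQSA

/-- Optimal rate of convergence for linear QSA (Theorem 2, equation (27)):
under the eigenvalue condition `Re λ(Ā) < -ε_S` (`0 < ε_S`, `ε_S ≠ 1`, `δ_S = min(ε_S,1)`)
and boundedness of `ξ, ξ^I, ξ^II`, there is `C < ∞` such that every linear QSA process
satisfies `‖(t+1)θ(t) - ξ^I(t)‖ ≤ C(1 + ‖θ(0)‖)/(1+t)^{δ_S}`; in particular
`ν(t) = (t+1)θ(t)` couples with `ξ^I`: `‖ν(t) - ξ^I(t)‖ → 0`. -/
theorem linear_QSA_optimal_rate
    (d : ℕ) (A Abar : Matrix (Fin d) (Fin d) ℝ) (hAbar : Abar = 1 + A)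
    (S : ℝ → ℝ → Matrix (Fin d) (Fin d) ℝ)
    (hS : ∀ t r, S t r = NormedSpace.exp (Real.log ((1 + t) / (1 + r)) • Abar))
    (εS : ℝ) (hεS : 0 < εS) (hεS1 : εS ≠ 1) (δS : ℝ) (hδS : δS = min εS 1)
    (heig : ∀ μ ∈ spectrum ℂ (Abar.map (Complex.ofReal : ℝ → ℂ)), μ.re < -εS)
    (ξ : ℝ → EuclideanSpace ℝ (Fin d)) (hξ : ContinuousOn ξ (Set.Ici 0))
    (ξI ξII : ℝ → EuclideanSpace ℝ (Fin d))
    (hξI : ∀ t, ξI t = ∫ r in (0:ℝ)..t, ξ r)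
    (hξII : ∀ t, ξII t = ∫ r in (0:ℝ)..t, ξI r)
    (hbdd : ∃ M : ℝ, ∀ t : ℝ, 0 ≤ t → ‖ξ t‖ ≤ M ∧ ‖ξI t‖ ≤ M ∧ ‖ξII t‖ ≤ M) :
    ∃ C : ℝ, ∀ θ : ℝ → EuclideanSpace ℝ (Fin d),
      (∀ t : ℝ, 0 ≤ t →
        HasDerivAt θ ((1 / (t + 1)) • (Matrix.toEuclideanLin A (θ t) + ξ t)) t) →
      (∀ t : ℝ, 0 ≤ t →
        ‖(t + 1) • θ t - ξI t‖ ≤ C * (1 + ‖θ 0‖) / (1 + t) ^ δS) ∧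
      Tendsto (fun t => ‖(t + 1) • θ t - ξI t‖) atTop (nhds 0) := by
  subst hAbar hδS
  obtain ⟨M, hM⟩ := hbdd
  obtain ⟨K, hK⟩ := exists_norm_exp_smul_toEuclideanCLM_le heig
  rw [map_add, map_one] at hK
  obtain ⟨C, hC⟩ := linear_QSA_optimal_rate_general hεS hεS1 hK hξ hξI hξII
    fun t ht => (hM t ht).2.2
  exact ⟨C, fun θ hθ => hC θ fun t ht => (hθ t ht).hasDerivWithinAt⟩
end

section
/- Integration-by-parts identity for weighted transition-matrix integrals (Lemma 3, general form, equation (48)). Let γ : [0,∞) → ℝ^d be continuous and let γ^I : [0,∞) → ℝ^d be continuously differentiable with dγ^I/dr(r) = γ(r) for all r ≥ 0. Then for every real m ≥ 0 and every t > 0: ∫₀^t (1+r)^{−m}·S(t;r)·γ(r) dr = (1+t)^{−m}·γ^I(t) − S(t;0)·γ^I(0) + ∫₀^t (1+r)^{−(m+1)}·S(t;r)·(m·I + Ā)·γ^I(r) dr. -/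
open intervalIntegral

/-!
The weighted transition operator `W r = (1 + r) ^ (-m) • S(t;r)` solves the backward equation
`W' r = -(1 + r) ^ (-(m + 1)) • S(t;r) (m + Ā)` with `W t = (1 + t) ^ (-m)`, so the identity is
integration by parts for `∫ W • γ = ∫ W • (γ^I)'`. Since nothing beyond the product rule for the
action of `W` is used, `Ā` may be any element of a Banach algebra acting on a Banach space.
-/

open MeasureTheory Set
open scoped Interval

section IntegrationByParts

variable {𝔸 E : Type*} [NormedRing 𝔸] [NormedAlgebra ℝ 𝔸]
  [NormedAddCommGroup E] [NormedSpace ℝ E] [CompleteSpace E]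
  [Module 𝔸 E] [IsBoundedSMul 𝔸 E] [IsScalarTower ℝ 𝔸 E]

theorem integral_algebra_smul_deriv_eq_deriv_smul {a b : ℝ} {u u' : ℝ → 𝔸} {v v' : ℝ → E}
    (hu : ContinuousOn u [[a, b]]) (hv : ContinuousOn v [[a, b]])
    (huu' : ∀ x ∈ Ioo (min a b) (max a b), HasDerivAt u (u' x) x)
    (hvv' : ∀ x ∈ Ioo (min a b) (max a b), HasDerivAt v (v' x) x)
    (hu' : IntervalIntegrable u' volume a b) (hv' : IntervalIntegrable v' volume a b) :
    ∫ x in a..b, u x • v' x = u b • v b - u a • v a - ∫ x in a..b, u' x • v x := by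
  have huv' : IntervalIntegrable (fun x ↦ u x • v' x) volume a b := hv'.continuousOn_smul hu
  have hu'v : IntervalIntegrable (fun x ↦ u' x • v x) volume a b := hu'.smul_continuousOn hv
  have h_ftc : ∫ x in a..b, (u x • v' x + u' x • v x) = u b • v b - u a • v a :=
    integral_eq_sub_of_hasDeriv_right (hu.smul hv)
      (fun x hx ↦ ((huu' x hx).smul (hvv' x hx)).hasDerivWithinAt) (huv'.add hu'v)
  rw [← h_ftc, integral_add huv' hu'v, add_sub_cancel_right]

end IntegrationByParts

theorem hasDerivAt_log_one_add_div {t r : ℝ} (ht : 1 + t ≠ 0) (hr : 1 + r ≠ 0) :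
    HasDerivAt (fun s ↦ Real.log ((1 + t) / (1 + s))) (-(1 + r)⁻¹) r := by
  refine (((hasDerivAt_const r (1 + t)).fun_div ((hasDerivAt_id' r).const_add 1) hr).log
    (div_ne_zero ht hr)).congr_deriv ?_
  field_simp
  ring

theorem hasDerivAt_one_add_rpow {p r : ℝ} (hr : 1 + r ≠ 0) :
    HasDerivAt (fun s : ℝ ↦ (1 + s) ^ p) (p * (1 + r) ^ (p - 1)) r := by
  simpa using ((hasDerivAt_id' r).const_add 1).rpow_const (p := p) (.inl hr)

section StateTransition

variable {𝔸 : Type*} [NormedRing 𝔸] [NormedAlgebra ℝ 𝔸]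

/-- The state transition operator `S(t;r)` from time `r` to time `t` of the linear equation
`x' = (1 + t)⁻¹ • a * x`, with `a` in a normed algebra rather than a matrix `Ā`. It has this meaning
for times greater than `-1` only: elsewhere `Real.log` and division by `0` take junk values. -/
noncomputable def stateTransition (a : 𝔸) (t r : ℝ) : 𝔸 :=
  NormedSpace.exp (Real.log ((1 + t) / (1 + r)) • a)

theorem stateTransition_self (a : 𝔸) (t : ℝ) : stateTransition a t t = 1 := by
  by_cases ht : 1 + t = 0 <;> simp [stateTransition, ht]

variable [CompleteSpace 𝔸]

theorem hasDerivAt_stateTransition (a : 𝔸) {t r : ℝ} (ht : 1 + t ≠ 0) (hr : 1 + r ≠ 0) :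
    HasDerivAt (stateTransition a t) (-(1 + r)⁻¹ • (stateTransition a t r * a)) r :=
  (hasDerivAt_exp_smul_const a _).scomp r (hasDerivAt_log_one_add_div ht hr)

theorem hasDerivAt_rpow_smul_stateTransition (a : 𝔸) (m : ℝ) {t r : ℝ} (ht : 1 + t ≠ 0)
    (hr : 1 + r ≠ 0) :
    HasDerivAt (fun s : ℝ ↦ (1 + s) ^ (-m) • stateTransition a t s)
      (-((1 + r) ^ (-(m + 1)) • (stateTransition a t r * (m • 1 + a)))) r := by
  have h_rpow : (1 + r) ^ (-m) * (1 + r)⁻¹ = (1 + r) ^ (-(m + 1)) := by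
    rw [neg_add', Real.rpow_sub_one hr, div_eq_mul_inv]
  refine ((hasDerivAt_one_add_rpow hr).fun_smul
    (hasDerivAt_stateTransition a ht hr)).congr_deriv ?_
  rw [smul_smul, mul_neg, h_rpow, ← neg_add', mul_add, mul_smul_comm, mul_one]
  module

end StateTransition

section General

variable {𝔸 E : Type*} [NormedRing 𝔸] [NormedAlgebra ℝ 𝔸] [CompleteSpace 𝔸]
  [NormedAddCommGroup E] [NormedSpace ℝ E] [CompleteSpace E]
  [Module 𝔸 E] [IsBoundedSMul 𝔸 E] [IsScalarTower ℝ 𝔸 E]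

theorem weighted_state_transition_integration_by_parts_general (a : 𝔸) (m : ℝ) {t₀ t : ℝ}
    (ht₀ : -1 < t₀) (ht : -1 < t) {γ γI : ℝ → E} (hγ : IntervalIntegrable γ volume t₀ t)
    (hγI : ContinuousOn γI [[t₀, t]])
    (hγI' : ∀ r ∈ Ioo (min t₀ t) (max t₀ t), HasDerivAt γI (γ r) r) :
    ∫ r in t₀..t, (1 + r) ^ (-m) • stateTransition a t r • γ r
      = (1 + t) ^ (-m) • γI t - (1 + t₀) ^ (-m) • stateTransition a t t₀ • γI t₀
        + ∫ r in t₀..t, (1 + r) ^ (-(m + 1)) • (stateTransition a t r * (m • 1 + a)) • γI r := by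
  have h_ne : ∀ r ∈ [[t₀, t]], 1 + r ≠ 0 := fun r hr ↦ by
    linarith [(lt_min ht₀ ht).trans_le hr.1]
  have hW : ∀ r ∈ [[t₀, t]], HasDerivAt (fun s : ℝ ↦ (1 + s) ^ (-m) • stateTransition a t s)
      (-((1 + r) ^ (-(m + 1)) • (stateTransition a t r * (m • 1 + a)))) r :=
    fun r hr ↦ hasDerivAt_rpow_smul_stateTransition a m (h_ne t right_mem_uIcc) (h_ne r hr)
  have hW'_cont : ContinuousOn (fun r : ℝ ↦
      -((1 + r) ^ (-(m + 1)) • (stateTransition a t r * (m • 1 + a)))) [[t₀, t]] := fun r hr ↦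
    ((hasDerivAt_one_add_rpow (h_ne r hr)).continuousAt.smul
      ((hasDerivAt_stateTransition a (h_ne t right_mem_uIcc) (h_ne r hr)).continuousAt.mul
        continuousAt_const)).neg.continuousWithinAt
  have h_parts := integral_algebra_smul_deriv_eq_deriv_smul (HasDerivAt.continuousOn hW) hγI
    (fun r hr ↦ hW r (Ioo_subset_Icc_self hr)) hγI' hW'_cont.intervalIntegrable hγ
  simpa only [smul_assoc, neg_smul, intervalIntegral.integral_neg, sub_neg_eq_add,
    stateTransition_self, one_smul] using h_parts

end General

section ContinuousLinearMap

variable {𝕜 E : Type*} [NontriviallyNormedField 𝕜] [SeminormedAddCommGroup E] [NormedSpace 𝕜 E]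

instance isBoundedSMul_continuousLinearMap : IsBoundedSMul (E →L[𝕜] E) E :=
  .of_norm_smul_le ContinuousLinearMap.le_opNorm

instance isScalarTower_continuousLinearMap : IsScalarTower 𝕜 (E →L[𝕜] E) E :=
  ⟨fun _ _ _ ↦ rfl⟩

end ContinuousLinearMap

section Matrix

variable {n 𝕜 : Type*} [Fintype n] [DecidableEq n] [RCLike 𝕜]

theorem toEuclideanLin_apply_eq_toEuclideanCLM_smul (M : Matrix n n 𝕜) (x : EuclideanSpace 𝕜 n) :
    Matrix.toEuclideanLin M x = Matrix.toEuclideanCLM (𝕜 := 𝕜) M • x :=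
  rfl

open scoped Matrix.Norms.L2Operator in
theorem toEuclideanCLM_exp (M : Matrix n n 𝕜) :
    Matrix.toEuclideanCLM (n := n) (𝕜 := 𝕜) (NormedSpace.exp M) =
      NormedSpace.exp (Matrix.toEuclideanCLM (n := n) (𝕜 := 𝕜) M) := by
  let _ : NormedAlgebra ℚ (Matrix n n 𝕜) := .restrictScalars ℚ 𝕜 _
  let _ : NormedAlgebra ℚ (EuclideanSpace 𝕜 n →L[𝕜] EuclideanSpace 𝕜 n) := .restrictScalars ℚ 𝕜 _
  exact NormedSpace.map_exp (Matrix.toEuclideanCLM (n := n) (𝕜 := 𝕜))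
    (AddMonoidHomClass.isometry_of_norm _ Matrix.l2_opNorm_toEuclideanCLM).continuous M

end Matrix

/-- Integration-by-parts identity for weighted transition-matrix integrals
(Lemma 3, general form, equation (48)): for continuous `γ` with antiderivative `γ^I`,
real `m ≥ 0` and `t > 0`,
`∫₀^t (1+r)^{-m} S(t;r) γ(r) dr = (1+t)^{-m} γ^I(t) - S(t;0) γ^I(0)
  + ∫₀^t (1+r)^{-(m+1)} S(t;r) (m I + Ā) γ^I(r) dr`. -/
theorem weighted_state_transition_integration_by_parts
    (d : ℕ) (A Abar : Matrix (Fin d) (Fin d) ℝ) (hAbar : Abar = 1 + A)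
    (S : ℝ → ℝ → Matrix (Fin d) (Fin d) ℝ)
    (hS : ∀ t r, S t r = NormedSpace.exp (Real.log ((1 + t) / (1 + r)) • Abar))
    (γ γI : ℝ → EuclideanSpace ℝ (Fin d))
    (hγ : ContinuousOn γ (Set.Ici 0))
    (hγI : ∀ r : ℝ, 0 ≤ r → HasDerivAt γI (γ r) r) :
    ∀ m : ℝ, 0 ≤ m → ∀ t : ℝ, 0 < t →
      (∫ r in (0:ℝ)..t, ((1 + r) ^ (-m) : ℝ) • Matrix.toEuclideanLin (S t r) (γ r))
        = ((1 + t) ^ (-m) : ℝ) • γI t - Matrix.toEuclideanLin (S t 0) (γI 0)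
          + ∫ r in (0:ℝ)..t, ((1 + r) ^ (-(m + 1)) : ℝ) •
              Matrix.toEuclideanLin (S t r * (m • (1 : Matrix (Fin d) (Fin d) ℝ) + Abar)) (γI r) := by
  intro m _ t ht
  have h_nonneg : ∀ r ∈ [[0, t]], 0 ≤ r := fun r hr ↦ (uIcc_of_le ht.le ▸ hr).1
  have h_parts := weighted_state_transition_integration_by_parts_general
    (Matrix.toEuclideanCLM (n := Fin d) (𝕜 := ℝ) Abar) m neg_one_lt_zero
    (neg_one_lt_zero.trans ht) (hγ.mono h_nonneg).intervalIntegrable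
    (HasDerivAt.continuousOn fun r hr ↦ hγI r (h_nonneg r hr))
    (fun r hr ↦ hγI r (h_nonneg r (Ioo_subset_Icc_self hr)))
  simpa only [hS, toEuclideanLin_apply_eq_toEuclideanCLM_smul, toEuclideanCLM_exp, stateTransition,
    map_mul, map_add, map_smul, map_one, add_zero, Real.one_rpow, one_smul] using h_parts
end
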